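/- Let σ : ℝ → ℝ be a function for which there exist x₀ ∈ ℝ, δ > 0, and s₋ ≠ s₊ with σ(x₀ + u) = σ(x₀) + s₊·u for all u ∈ [0, δ] and σ(x₀ + u) = σ(x₀) + s₋·u for all u ∈ [−δ, 0]. Let n₀ ≥ 1, L ≥ 1, n_L ≥ 1, and n₁, …, n_{L−1} be integers with n_l ≥ 2n₀ for every l ∈ {1, …, L−1}, and let μ denote Lebesgue measure on ℝ^{n₀}. Then there exist affine maps A_l : ℝ^{n_{l−1}} → ℝ^{n_l} for l = 1, …, L such that the function F := A_L ∘ σ_{L−1} ∘ A_{L−1} ∘ ⋯ ∘ σ_1 ∘ A_1 — where each σ_l : ℝ^{n_l} → ℝ^{n_l} applies σ to each coordinate — satisfies: for every measurable set U ⊆ [0, 1]^{n₀} with μ(U) > ∏_{l=1}^{L−1} ⌊n_l/(2n₀)⌋^{−n₀}, there is no affine map A : ℝ^{n₀} → ℝ^{n_L} with F(x) = A(x) for all x ∈ U. -/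

import Mathlib

/-!
The triangle wave of period `2` folds `[0, p]` onto `[0, 1]`, and the waves of frequencies `p` and
`q` compose to the wave of frequency `p * q`. On `[0, 1]` the wave of frequency `p` has `p - 1`
interior breakpoints. Each costs one unit sitting at the breakpoint of `σ`, the affine remainder
costs one more, so `p` units per input coordinate suffice for one fold (the bound with `2 * d 0` in
the denominator allows for `2 * p`). After all layers each coordinate is folded `P` times, `P` being
the product of the frequencies, and the output is a combination of the folded coordinates whose
coefficients are linearly independent over `ℤ`. Distinct cells of the grid of mesh `1 / P` then
carry distinct affine maps, so up to a null set a given affine map agrees with the network on at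
most one cell.
-/

open MeasureTheory ENNReal

/-- An `(L+1)`-affine-layer network with activation `σ`:
`sigmaNet σ d A L = A_L ∘ σ ∘ A_{L-1} ∘ ⋯ ∘ σ ∘ A_0`, where `σ` is applied to each
coordinate and `A l : ℝ^{d l} → ℝ^{d (l+1)}` are affine maps. -/
noncomputable def sigmaNet (σ : ℝ → ℝ) (d : ℕ → ℕ)
    (A : ∀ l : ℕ, (Fin (d l) → ℝ) →ᵃ[ℝ] (Fin (d (l + 1)) → ℝ)) :
    ∀ L : ℕ, (Fin (d 0) → ℝ) → (Fin (d (L + 1)) → ℝ)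
  | 0 => fun x => A 0 x
  | L + 1 => fun x => A (L + 1) (fun j => σ (sigmaNet σ d A L x j))

section AffinePieces

variable {E F : Type*} [NormedAddCommGroup E] [NormedSpace ℝ E] [MeasurableSpace E] [BorelSpace E]
  [FiniteDimensional ℝ E] [AddCommGroup F] [Module ℝ F] (μ : Measure E) [μ.IsAddHaarMeasure]

lemma measure_setOf_affineMap_eq_zero {f g : E →ᵃ[ℝ] F} (hfg : f ≠ g) :
    μ {x | f x = g x} = 0 := by
  let S : AffineSubspace ℝ E := (AffineSubspace.mk' (0 : F) ⊥).comap (f - g)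
  have mem_S (x : E) : x ∈ S ↔ f x = g x := by simp [S, sub_eq_zero]
  have hS : S ≠ ⊤ := fun h => hfg <| AffineMap.ext fun x => (mem_S x).1 (h ▸ trivial)
  convert Measure.addHaar_affineSubspace μ S hS using 2
  ext x
  exact (mem_S x).symm

lemma measure_setOf_eq_affineMap_le {κ : Type*} [Countable κ] {f : E → F} {S : κ → Set E}
    {G : κ → E →ᵃ[ℝ] F} (hS : ∀ x, ∃ k, x ∈ S k) (hf : ∀ k, Set.EqOn f (G k) (S k))
    (hG : Function.Injective G) {r : ℝ≥0∞} (hr : ∀ k, μ (S k) ≤ r) (B : E →ᵃ[ℝ] F) :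
    μ {x | f x = B x} ≤ r := by
  have hsame : μ (⋃ k ∈ {k | G k = B}, S k) ≤ r := by
    have hsub : {k | G k = B}.Subsingleton := fun k hk l hl => hG (hk.trans hl.symm)
    obtain h | ⟨k, h⟩ := hsub.eq_empty_or_singleton
    · simp [h]
    · simpa [h] using hr k
  have hother : μ (⋃ k ∈ {k | G k ≠ B}, {x | G k x = B x}) = 0 :=
    (measure_biUnion_null_iff (Set.to_countable _)).2 fun k hk =>
      measure_setOf_affineMap_eq_zero μ hk
  calc μ {x | f x = B x}
      ≤ μ ((⋃ k ∈ {k | G k = B}, S k) ∪ ⋃ k ∈ {k | G k ≠ B}, {x | G k x = B x}) := by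
        refine measure_mono fun x hx => ?_
        obtain ⟨k, hk⟩ := hS x
        by_cases hB : G k = B
        · exact Or.inl (Set.mem_biUnion hB hk)
        · exact Or.inr (Set.mem_biUnion hB ((hf k hk).symm.trans hx))
    _ ≤ r + 0 := (measure_union_le _ _).trans (add_le_add hsame hother.le)
    _ = r := add_zero r

end AffinePieces

/-- The triangle wave of period `2`, namely the distance to `2ℤ`, encoded as the norm on the circle
`ℝ / 2ℤ`. It is the folding map realised by the hidden layers. -/
noncomputable def triangleWave (y : ℝ) : ℝ := ‖(y : AddCircle (2 : ℝ))‖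

/-- The slope of the affine piece of `triangleWave` over `[k, k + 1]`. -/
def waveSlope (k : ℤ) : ℤ := if Even k then 1 else -1

/-- The value at `0` of the affine piece of `triangleWave` over `[k, k + 1]`. -/
def waveIntercept (k : ℤ) : ℤ := if Even k then -k else k + 1

lemma triangleWave_of_abs_le_one {y : ℝ} (hy : |y| ≤ 1) : triangleWave y = |y| :=
  (AddCircle.norm_coe_eq_abs_iff 2 two_ne_zero).2 (by simpa using hy)

lemma triangleWave_of_mem_Icc {y : ℝ} (hy : y ∈ Set.Icc (0 : ℝ) 1) : triangleWave y = y := by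
  rw [triangleWave_of_abs_le_one (abs_le.2 ⟨by linarith [hy.1], hy.2⟩), abs_of_nonneg hy.1]

lemma triangleWave_mem_Icc (y : ℝ) : triangleWave y ∈ Set.Icc (0 : ℝ) 1 :=
  ⟨norm_nonneg _, by simpa [triangleWave] using AddCircle.norm_le_half_period 2 two_ne_zero⟩

lemma triangleWave_sub_two_mul_int (y : ℝ) (m : ℤ) :
    triangleWave (y - 2 * m) = triangleWave y := by
  have h : ((2 * m : ℝ) : AddCircle (2 : ℝ)) = 0 :=
    (AddCircle.coe_eq_zero_iff 2).2 ⟨m, by rw [zsmul_eq_mul, mul_comm]⟩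
  rw [triangleWave, AddCircle.coe_sub, h, sub_zero, triangleWave]

lemma triangleWave_abs (y : ℝ) : triangleWave |y| = triangleWave y := by
  rcases abs_choice y with h | h <;> simp [triangleWave, h]

lemma triangleWave_of_mem_Icc_int {k : ℤ} {y : ℝ} (hy : y ∈ Set.Icc (k : ℝ) (k + 1)) :
    triangleWave y = waveSlope k * y + waveIntercept k := by
  obtain ⟨hky, hyk⟩ := hy
  rcases Int.even_or_odd' k with ⟨m, rfl | rfl⟩ <;> push_cast at hky hyk
  · rw [← triangleWave_sub_two_mul_int y m, triangleWave_of_mem_Icc ⟨by linarith, by linarith⟩]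
    simp only [waveSlope, waveIntercept, if_pos (even_two_mul m)]
    push_cast
    ring
  · have hodd : ¬ Even (2 * m + 1) := Int.not_even_two_mul_add_one m
    have hnonpos : y - 2 * (m + 1 : ℤ) ≤ 0 := by push_cast; linarith
    rw [← triangleWave_sub_two_mul_int y (m + 1), triangleWave_of_abs_le_one, abs_of_nonpos hnonpos]
    · simp only [waveSlope, waveIntercept, if_neg hodd]
      push_cast
      ring
    · rw [abs_of_nonpos hnonpos]; push_cast; linarith

lemma triangleWave_natCast_mul_triangleWave (n : ℕ) (y : ℝ) :
    triangleWave (n * triangleWave y) = triangleWave (n * y) := by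
  obtain ⟨m, hm⟩ : ∃ m : ℤ, triangleWave y = |y - 2 * m| :=
    ⟨_, (AddCircle.norm_eq 2).trans (by rw [mul_comm (2 : ℝ)])⟩
  calc triangleWave (n * triangleWave y)
      = triangleWave |n * (y - 2 * m)| := by rw [hm, abs_mul, Nat.abs_cast]
    _ = triangleWave (n * y - 2 * (n * m : ℤ)) := by
      rw [triangleWave_abs]
      push_cast
      ring_nf
    _ = triangleWave (n * y) := triangleWave_sub_two_mul_int _ _

lemma triangleWave_add_one (y : ℝ) : triangleWave (y + 1) = 1 - triangleWave y := by
  have hy : y ∈ Set.Icc (⌊y⌋ : ℝ) (⌊y⌋ + 1) := ⟨Int.floor_le y, (Int.lt_floor_add_one y).le⟩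
  have hy' : y + 1 ∈ Set.Icc ((⌊y⌋ + 1 : ℤ) : ℝ) ((⌊y⌋ + 1 : ℤ) + 1) := by
    push_cast
    exact ⟨by linarith [hy.1], by linarith [hy.2]⟩
  rw [triangleWave_of_mem_Icc_int hy, triangleWave_of_mem_Icc_int hy']
  simp only [waveSlope, waveIntercept, Int.even_add_one]
  split_ifs <;> push_cast <;> ring

lemma triangleWave_eq_add_sum_max (q : ℕ) {y : ℝ} (hy : y ∈ Set.Icc (0 : ℝ) (q + 1)) :
    triangleWave y =
      y + ∑ j ∈ Finset.range q, 2 * (-1 : ℝ) ^ (j + 1) * max (y - (j + 1)) 0 := by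
  induction q generalizing y with
  | zero => simp [triangleWave_of_mem_Icc (by simpa using hy)]
  | succ q ih =>
    rcases le_total y 1 with hy1 | hy1
    · rw [triangleWave_of_mem_Icc ⟨hy.1, hy1⟩, Finset.sum_eq_zero, add_zero]
      intro j _
      rw [max_eq_right (by linarith [Nat.cast_nonneg (α := ℝ) j]), mul_zero]
    · have hshift := ih (y := y - 1) ⟨by linarith, by linarith [hy.2, Nat.cast_succ (R := ℝ) q]⟩
      have hterm (j : ℕ) : 2 * (-1 : ℝ) ^ (j + 1 + 1) * max (y - ((j + 1 : ℕ) + 1)) 0 =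
          -(2 * (-1 : ℝ) ^ (j + 1) * max (y - 1 - (j + 1)) 0) := by
        rw [pow_succ _ (j + 1), show y - ((j + 1 : ℕ) + 1) = y - 1 - (j + 1) by push_cast; ring]
        ring
      rw [← sub_add_cancel y 1, triangleWave_add_one, hshift, sub_add_cancel,
        Finset.sum_range_succ', Finset.sum_congr rfl fun j _ => hterm j, Finset.sum_neg_distrib,
        Nat.cast_zero, zero_add, zero_add, max_eq_left (sub_nonneg.2 hy1)]
      ring

section Pieces

variable {ι V : Type*} [Fintype ι] [AddCommGroup V] [Module ℝ V]

/-- The affine map which `x ↦ ∑ i, triangleWave (P * x i) • c i` equals on the cell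
`∏ i, [κ i / P, (κ i + 1) / P]`. -/
noncomputable def foldPiece (c : ι → V) (P : ℝ) (κ : ι → ℤ) : (ι → ℝ) →ᵃ[ℝ] V :=
  (Fintype.linearCombination ℝ c).toAffineMap.comp <| AffineMap.pi fun i =>
    (waveSlope (κ i) * P) • AffineMap.proj i + AffineMap.const ℝ _ (waveIntercept (κ i) : ℝ)

lemma foldPiece_apply (c : ι → V) (P : ℝ) (κ : ι → ℤ) (x : ι → ℝ) :
    foldPiece c P κ x =
      Fintype.linearCombination ℝ c fun i =>
        waveSlope (κ i) * (P * x i) + waveIntercept (κ i) := by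
  simp [foldPiece, Fintype.linearCombination_apply, mul_assoc]

lemma foldPiece_injective {c : ι → V} (hc : LinearIndependent ℤ c) {P : ℝ} (hP : P ≠ 0) :
    Function.Injective (foldPiece c P) := by
  intro κ κ' h
  have heval (z : ℤ) : (fun i => waveSlope (κ i) * z + waveIntercept (κ i)) =
      fun i => waveSlope (κ' i) * z + waveIntercept (κ' i) := by
    apply linearIndependent_iff_injective_fintypeLinearCombination.1 hc
    have hz := congrArg (· fun _ => z / P) h
    simp only [foldPiece_apply, mul_div_cancel₀ _ hP] at hz
    simpa [Fintype.linearCombination_apply, ← Int.cast_smul_eq_zsmul ℝ] using hz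
  funext i
  have h0 := congrFun (heval 0) i
  have h1 := congrFun (heval 1) i
  simp only [waveSlope, waveIntercept] at h0 h1
  split_ifs at h0 h1 <;> omega

lemma volume_setOf_linearCombination_triangleWave_eq_le {c : ι → V}
    (hc : LinearIndependent ℤ c) {P : ℕ} (hP : 0 < P) (B : (ι → ℝ) →ᵃ[ℝ] V) :
    volume {x : ι → ℝ | Fintype.linearCombination ℝ c (fun i => triangleWave (P * x i)) = B x} ≤
      ((P : ℝ≥0∞) ^ Fintype.card ι)⁻¹ := by
  have : NeZero P := ⟨hP.ne'⟩
  refine measure_setOf_eq_affineMap_le volume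
    (S := fun κ => (BoxIntegral.unitPartition.box P κ : Set (ι → ℝ)))
    (fun x => ⟨_, BoxIntegral.unitPartition.mem_box_iff_index.2 rfl⟩) (fun κ x hx => ?_)
    (foldPiece_injective hc (Nat.cast_ne_zero.2 hP.ne')) (fun κ => ?_) B
  · have hx' := BoxIntegral.unitPartition.mem_box_iff'.1 hx
    simp only [foldPiece_apply]
    congr 1
    funext i
    exact triangleWave_of_mem_Icc_int ⟨(hx' i).1.le, (hx' i).2⟩
  · rw [BoxIntegral.unitPartition.volume_box]
    simp

end Pieces

/-- On `[0, 1]` the function `f` is computed by a one-hidden-layer network with `p` units of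
activation `σ`, where `w`, `b` are the inner weights and biases, `c`, `c₀` the outer ones. -/
def IsShallowNet (σ : ℝ → ℝ) (p : ℕ) (f : ℝ → ℝ) : Prop :=
  ∃ (w b c : Fin p → ℝ) (c₀ : ℝ), ∀ t ∈ Set.Icc (0 : ℝ) 1, f t = ∑ k, c k * σ (w k * t + b k) + c₀

lemma IsShallowNet.congr {σ f g : ℝ → ℝ} {p : ℕ} (hf : IsShallowNet σ p f)
    (hfg : Set.EqOn g f (Set.Icc 0 1)) : IsShallowNet σ p g := by
  obtain ⟨w, b, c, c₀, h⟩ := hf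
  exact ⟨w, b, c, c₀, fun t ht => (hfg ht).trans (h t ht)⟩

lemma IsShallowNet.add {σ f g : ℝ → ℝ} {p q : ℕ} (hf : IsShallowNet σ p f)
    (hg : IsShallowNet σ q g) : IsShallowNet σ (p + q) (fun t => f t + g t) := by
  obtain ⟨w, b, c, c₀, hf⟩ := hf
  obtain ⟨w', b', c', c₀', hg⟩ := hg
  refine ⟨Fin.append w w', Fin.append b b', Fin.append c c', c₀ + c₀', fun t ht => ?_⟩
  simp only [Fin.sum_univ_add, Fin.append_left, Fin.append_right, hf t ht, hg t ht]
  ring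

section Breakpoint

variable {σ : ℝ → ℝ} {x₀ δ sminus splus : ℝ}
  (hplus : ∀ u ∈ Set.Icc (0 : ℝ) δ, σ (x₀ + u) = σ x₀ + splus * u)
  (hminus : ∀ u ∈ Set.Icc (-δ) (0 : ℝ), σ (x₀ + u) = σ x₀ + sminus * u)

include hplus hminus

lemma activation_eq_add_max {u : ℝ} (hu : |u| ≤ δ) :
    σ (x₀ + u) = σ x₀ + sminus * u + (splus - sminus) * max u 0 := by
  obtain ⟨hu₁, hu₂⟩ := abs_le.1 hu
  rcases le_total u 0 with h | h
  · rw [hminus u ⟨hu₁, h⟩, max_eq_right h, mul_zero, add_zero]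
  · rw [hplus u ⟨h, hu₂⟩, max_eq_left h]
    ring

variable (hδ : 0 < δ) (hs : sminus ≠ splus)

include hδ hs

lemma isShallowNet_affine (a₁ a₀ : ℝ) : IsShallowNet σ 1 (fun t => a₁ * t + a₀) := by
  obtain ⟨v, s, hv, hs₀, hlin⟩ : ∃ v s : ℝ, v ≠ 0 ∧ s ≠ 0 ∧
      ∀ t ∈ Set.Icc (0 : ℝ) 1, σ (x₀ + v * t) = σ x₀ + s * (v * t) := by
    by_cases h : splus = 0
    · exact ⟨-δ, sminus, neg_ne_zero.2 hδ.ne', h ▸ hs,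
        fun t ht => hminus _ ⟨by nlinarith [ht.2], by nlinarith [ht.1]⟩⟩
    · exact ⟨δ, splus, hδ.ne', h, fun t ht => hplus _ ⟨by nlinarith [ht.1], by nlinarith [ht.2]⟩⟩
  refine ⟨fun _ => v, fun _ => x₀, fun _ => a₁ / (s * v), a₀ - a₁ / (s * v) * σ x₀,
    fun t ht => ?_⟩
  rw [Fin.sum_univ_one, add_comm (v * t), hlin t ht]
  field_simp
  ring

lemma max_sub_eq_activation {β t : ℝ} (hβ : β ∈ Set.Icc (0 : ℝ) 1) (ht : t ∈ Set.Icc (0 : ℝ) 1) :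
    max (t - β) 0 = ((splus - sminus) * δ)⁻¹ *
      (σ (δ * t + (x₀ - δ * β)) - σ x₀ - sminus * δ * (t - β)) := by
  have hdiff : splus - sminus ≠ 0 := sub_ne_zero.2 hs.symm
  have habs : |δ * (t - β)| ≤ δ := by
    rw [abs_mul, abs_of_pos hδ]
    exact mul_le_of_le_one_right hδ.le
      (abs_le.2 ⟨by linarith [ht.1, hβ.2], by linarith [ht.2, hβ.1]⟩)
  have hmax : max (δ * (t - β)) 0 = δ * max (t - β) 0 := by
    rw [mul_max_of_nonneg _ _ hδ.le, mul_zero]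
  rw [show δ * t + (x₀ - δ * β) = x₀ + δ * (t - β) by ring,
    activation_eq_add_max hplus hminus habs, hmax]
  field_simp
  ring

lemma isShallowNet_affine_add_sum_max {q : ℕ} (a₁ a₀ : ℝ) (c : Fin q → ℝ) {β : Fin q → ℝ}
    (hβ : ∀ j, β j ∈ Set.Icc (0 : ℝ) 1) :
    IsShallowNet σ (q + 1) (fun t => ∑ j, c j * max (t - β j) 0 + (a₁ * t + a₀)) := by
  set D := (splus - sminus) * δ
  have hunits : IsShallowNet σ q (fun t => ∑ j, c j * D⁻¹ * σ (δ * t + (x₀ - δ * β j))) :=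
    ⟨_, _, _, 0, fun t _ => (add_zero _).symm⟩
  have hrest := isShallowNet_affine hplus hminus hδ hs
    (a₁ - ∑ j, c j * D⁻¹ * (sminus * δ)) (a₀ - ∑ j, c j * D⁻¹ * (σ x₀ - sminus * δ * β j))
  refine (hunits.add hrest).congr fun t ht => ?_
  have hterm (j : Fin q) : c j * max (t - β j) 0 =
      c j * D⁻¹ * σ (δ * t + (x₀ - δ * β j)) - c j * D⁻¹ * (sminus * δ) * t -
        c j * D⁻¹ * (σ x₀ - sminus * δ * β j) := by
    rw [max_sub_eq_activation hplus hminus hδ hs (hβ j) ht]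
    ring
  simp only [hterm, Finset.sum_sub_distrib, ← Finset.sum_mul]
  ring

lemma isShallowNet_triangleWave {p : ℕ} (hp : 0 < p) :
    IsShallowNet σ p (fun t => triangleWave (p * t)) := by
  obtain ⟨q, rfl⟩ := Nat.exists_eq_add_of_le' hp
  have hpos : (0 : ℝ) < (q + 1 : ℕ) := by positivity
  have hβ (j : Fin q) : ((j : ℝ) + 1) / (q + 1 : ℕ) ∈ Set.Icc (0 : ℝ) 1 :=
    ⟨by positivity, (div_le_one hpos).2 (by exact_mod_cast Nat.succ_le_succ j.2.le)⟩
  refine (isShallowNet_affine_add_sum_max hplus hminus hδ hs (q + 1 : ℕ) 0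
    (fun j : Fin q => 2 * (-1 : ℝ) ^ ((j : ℕ) + 1) * (q + 1 : ℕ)) hβ).congr fun t ht => ?_
  have hmax (j : ℕ) : max ((q + 1 : ℕ) * t - (j + 1)) 0 =
      (q + 1 : ℕ) * max (t - ((j : ℝ) + 1) / (q + 1 : ℕ)) 0 := by
    rw [mul_max_of_nonneg _ _ hpos.le, mul_zero, mul_sub, mul_div_cancel₀ _ hpos.ne']
  have hmem : ((q + 1 : ℕ) : ℝ) * t ∈ Set.Icc (0 : ℝ) (q + 1) :=
    ⟨mul_nonneg hpos.le ht.1, by simpa using mul_le_of_le_one_right hpos.le ht.2⟩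
  simp only [triangleWave_eq_add_sum_max q hmem, Finset.sum_range, hmax, mul_assoc]
  ring

end Breakpoint

lemma IsShallowNet.exists_layer {σ f : ℝ → ℝ} {n p m : ℕ} (hf : IsShallowNet σ p f)
    (hm : n * p ≤ m) :
    ∃ (A : (Fin n → ℝ) →ᵃ[ℝ] (Fin m → ℝ)) (C : (Fin m → ℝ) →ᵃ[ℝ] (Fin n → ℝ)),
      ∀ x ∈ Set.Icc (0 : Fin n → ℝ) 1, C (fun j => σ (A x j)) = fun i => f (x i) := by
  obtain ⟨w, b, c, c₀, h⟩ := hf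
  obtain ⟨e⟩ : Nonempty (Fin n × Fin p ↪ Fin m) :=
    Function.Embedding.nonempty_of_card_le (by simpa using hm)
  let A : (Fin n → ℝ) →ᵃ[ℝ] (Fin n × Fin p → ℝ) :=
    AffineMap.pi fun v => w v.2 • AffineMap.proj v.1 + AffineMap.const ℝ _ (b v.2)
  let C : (Fin n × Fin p → ℝ) →ᵃ[ℝ] (Fin n → ℝ) :=
    AffineMap.pi fun i => (∑ k, c k • (LinearMap.proj (i, k) : (_ → ℝ) →ₗ[ℝ] ℝ)).toAffineMap +
      AffineMap.const ℝ _ c₀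
  refine ⟨(Function.ExtendByZero.linearMap ℝ e).toAffineMap.comp A,
    C.comp (LinearMap.funLeft ℝ ℝ e).toAffineMap, fun x hx => ?_⟩
  funext i
  simp [A, C, h (x i) ⟨hx.1 i, hx.2 i⟩, LinearMap.funLeft_apply, e.injective.extend_apply]

lemma sigmaNet_congr (σ : ℝ → ℝ) (d : ℕ → ℕ)
    {A A' : ∀ l : ℕ, (Fin (d l) → ℝ) →ᵃ[ℝ] (Fin (d (l + 1)) → ℝ)} {L : ℕ}
    (h : ∀ l ≤ L, A l = A' l) : sigmaNet σ d A L = sigmaNet σ d A' L := by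
  induction L with
  | zero => simp only [sigmaNet, h 0 le_rfl]
  | succ L ih => simp only [sigmaNet, h (L + 1) le_rfl, ih fun l hl => h l (Nat.le_succ_of_le hl)]

lemma exists_sigmaNet_eq_comp_triangleWave {σ : ℝ → ℝ} {d p : ℕ → ℕ} {L : ℕ}
    (hσ : ∀ l ∈ Finset.Icc 1 L, IsShallowNet σ (p l) fun t => triangleWave (p l * t))
    (hd : ∀ l ∈ Finset.Icc 1 L, d 0 * p l ≤ d l)
    (T : (Fin (d 0) → ℝ) →ᵃ[ℝ] (Fin (d (L + 1)) → ℝ)) :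
    ∃ A : ∀ l : ℕ, (Fin (d l) → ℝ) →ᵃ[ℝ] (Fin (d (l + 1)) → ℝ),
      ∀ x ∈ Set.Icc (0 : Fin (d 0) → ℝ) 1, sigmaNet σ d A L x =
        T fun i => triangleWave ((∏ l ∈ Finset.Icc 1 L, p l : ℕ) * x i) := by
  induction L with
  | zero =>
    refine ⟨Function.update (fun l => AffineMap.const ℝ _ 0) 0 T, fun x hx => ?_⟩
    simp [sigmaNet, triangleWave_of_mem_Icc ⟨hx.1 _, hx.2 _⟩]
  | succ L ih =>
    have hsub : Finset.Icc 1 L ⊆ Finset.Icc 1 (L + 1) := Finset.Icc_subset_Icc_right L.le_succ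
    have hlast : L + 1 ∈ Finset.Icc 1 (L + 1) := Finset.right_mem_Icc.2 (by omega)
    obtain ⟨A₁, C, hC⟩ := (hσ _ hlast).exists_layer (hd _ hlast)
    obtain ⟨A, hA⟩ := ih (fun l hl => hσ l (hsub hl)) (fun l hl => hd l (hsub hl)) A₁
    refine ⟨Function.update A (L + 1) (T.comp C), fun x hx => ?_⟩
    have hagree : sigmaNet σ d (Function.update A (L + 1) (T.comp C)) L = sigmaNet σ d A L :=
      sigmaNet_congr σ d fun l hl => Function.update_of_ne (by omega) _ _
    have hfold (N : ℕ) : (fun i => triangleWave (N * x i)) ∈ Set.Icc (0 : Fin (d 0) → ℝ) 1 :=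
      ⟨fun _ => (triangleWave_mem_Icc _).1, fun _ => (triangleWave_mem_Icc _).2⟩
    simp only [sigmaNet, hagree, Function.update_self, AffineMap.comp_apply, hA x hx,
      hC _ (hfold _), triangleWave_natCast_mul_triangleWave]
    rw [Finset.prod_Icc_succ_top (Nat.le_add_left 1 L), mul_comm _ (p (L + 1))]
    simp only [Nat.cast_mul, mul_assoc]

lemma exists_linearIndependent_int_real (n : ℕ) : ∃ c : Fin n → ℝ, LinearIndependent ℤ c := by
  obtain ⟨c, hc⟩ : ∃ c : Fin n → ℝ, LinearIndependent ℚ c :=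
    exists_linearIndependent_of_le_rank <|
      Real.rank_rat_real ▸ (Cardinal.nat_lt_continuum n).le
  exact ⟨c, (LinearIndependent.iff_fractionRing ℤ ℚ).2 hc⟩

theorem piecewise_linear_network_fineness_general
    {σ : ℝ → ℝ} {x₀ δ sminus splus : ℝ} (hδ : 0 < δ) (hs : sminus ≠ splus)
    (hplus : ∀ u ∈ Set.Icc (0 : ℝ) δ, σ (x₀ + u) = σ x₀ + splus * u)
    (hminus : ∀ u ∈ Set.Icc (-δ) (0 : ℝ), σ (x₀ + u) = σ x₀ + sminus * u)
    (L : ℕ) (d p : ℕ → ℕ) (hp : ∀ l ∈ Finset.Icc 1 L, 0 < p l)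
    (hd : ∀ l ∈ Finset.Icc 1 L, d 0 * p l ≤ d l) :
    ∃ A : ∀ l : ℕ, (Fin (d l) → ℝ) →ᵃ[ℝ] (Fin (d (l + 1)) → ℝ),
      ∀ (j : Fin (d (L + 1))) (B : (Fin (d 0) → ℝ) →ᵃ[ℝ] ℝ),
        volume {x ∈ Set.Icc (0 : Fin (d 0) → ℝ) 1 | sigmaNet σ d A L x j = B x} ≤
          (∏ l ∈ Finset.Icc 1 L, (p l : ℝ≥0∞) ^ d 0)⁻¹ := by
  obtain ⟨c, hc⟩ := exists_linearIndependent_int_real (d 0)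
  obtain ⟨A, hA⟩ := exists_sigmaNet_eq_comp_triangleWave
    (fun l hl => isShallowNet_triangleWave hplus hminus hδ hs (hp l hl)) hd
    (AffineMap.pi fun _ => (Fintype.linearCombination ℝ c).toAffineMap)
  refine ⟨A, fun j B => ?_⟩
  have hbound := volume_setOf_linearCombination_triangleWave_eq_le hc (Finset.prod_pos hp) B
  rw [Fintype.card_fin] at hbound
  rw [Finset.prod_pow, ← Nat.cast_prod]
  refine (measure_mono fun x hx => ?_).trans hbound
  simpa [hA x hx.1] using hx.2

/-- **Theorem 1**: for any activation `σ` having a breakpoint (affine with distinct slopes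
on the two sides of `x₀`), there is a choice of affine layers of an `L`-layer network with
`d l ≥ 2·(d 0)` units at the `l`-th layer (`1 ≤ l ≤ L−1`) whose fineness of linear regions
is at most `∏_{l=1}^{L−1} ⌊d l / (2·d 0)⌋^{−d 0}`: the network agrees with no affine map on
any measurable subset of `[0,1]^{d 0}` of measure exceeding this bound. -/
theorem piecewise_linear_network_fineness
    (σ : ℝ → ℝ) (x₀ δ sminus splus : ℝ) (hδ : 0 < δ) (hs : sminus ≠ splus)
    (hplus : ∀ u ∈ Set.Icc (0 : ℝ) δ, σ (x₀ + u) = σ x₀ + splus * u)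
    (hminus : ∀ u ∈ Set.Icc (-δ) (0 : ℝ), σ (x₀ + u) = σ x₀ + sminus * u)
    (L : ℕ) (hL : 1 ≤ L) (d : ℕ → ℕ)
    (hd0 : 1 ≤ d 0) (hdL : 1 ≤ d L)
    (hd : ∀ l, 1 ≤ l → l ≤ L - 1 → 2 * d 0 ≤ d l) :
    ∃ A : ∀ l : ℕ, (Fin (d l) → ℝ) →ᵃ[ℝ] (Fin (d (l + 1)) → ℝ),
      ∀ U : Set (Fin (d 0) → ℝ), U ⊆ Set.pi Set.univ (fun _ => Set.Icc (0 : ℝ) 1) →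
        MeasurableSet U →
        (∏ l ∈ Finset.Icc 1 (L - 1), ((d l / (2 * d 0) : ℕ) : ℝ≥0∞) ^ (d 0))⁻¹ < volume U →
        ¬ ∃ B : (Fin (d 0) → ℝ) →ᵃ[ℝ] (Fin (d (L - 1 + 1)) → ℝ),
            ∀ x ∈ U, sigmaNet σ d A (L - 1) x = B x := by
  obtain ⟨L, rfl⟩ := Nat.exists_eq_add_of_le' hL
  obtain ⟨A, hA⟩ := piecewise_linear_network_fineness_general hδ hs hplus hminus L d
    (fun l => d l / (2 * d 0))
    (fun l hl => Nat.div_pos (hd l (Finset.mem_Icc.1 hl).1 (Finset.mem_Icc.1 hl).2) (by omega))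
    (fun l _ => (Nat.mul_le_mul_right _ (by omega)).trans (Nat.mul_div_le (d l) (2 * d 0)))
  refine ⟨A, fun U hU _ hvol ⟨B, hB⟩ => hvol.not_ge ?_⟩
  refine (measure_mono fun x hx => ?_).trans (hA ⟨0, hdL⟩ ((AffineMap.proj ⟨0, hdL⟩).comp B))
  exact ⟨⟨fun i => (hU hx i trivial).1, fun i => (hU hx i trivial).2⟩, congrFun (hB x hx) _⟩
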